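/- In the two-dimensional regime with 0 < c/a ≤ λ^{-2} (equivalently d₀ = (1/2)log_λ(a/c) ≥ 1), the constant E_{d₀} = a(λ^{2d₀} − λ^{−2d₀}) + b(λ^{2d₀} − 1) vanishes, where a + b + c = 0; consequently the enstrophy |u|_{d₀} is conserved along smooth solutions of the unforced inviscid sabra shell model, and every solution with u^{in} ∈ V_s, s ≥ d₀, extends globally: u ∈ C¹((−∞,∞), V_s). -/

import Mathlib

open Complex

/-- Wavenumbers of the sabra shell model: `k n = k0 * λ^n`. -/
noncomputable def kk (k0 lam : ℝ) (n : ℤ) : ℝ := k0 * lam ^ n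

/-- Nonlinear term of the sabra shell model. -/
noncomputable def sB (a b c k0 lam : ℝ) (u : ℤ → ℂ) (n : ℤ) : ℂ :=
  -Complex.I * ((a : ℂ) * (kk k0 lam (n + 1) : ℝ) * u (n + 2) * (starRingEnd ℂ) (u (n + 1))
    + (b : ℂ) * (kk k0 lam n : ℝ) * u (n + 1) * (starRingEnd ℂ) (u (n - 1))
    - (c : ℂ) * (kk k0 lam (n - 1) : ℝ) * u (n - 1) * u (n - 2))

/-- Membership in `V_r`. -/
def InV (k0 lam r : ℝ) (u : ℤ → ℂ) : Prop :=
  (∀ n : ℤ, n ≤ 0 → u n = 0) ∧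
  Summable fun n : ℕ => (kk k0 lam ((n : ℤ) + 1)) ^ (2 * r) * ‖u ((n : ℤ) + 1)‖ ^ 2

/-- A global `C¹` solution (all of ℝ) of the unforced inviscid sabra shell model with
values in `V_s`. -/
def IsGlobalSolution (a b c k0 lam s : ℝ) (uin : ℤ → ℂ) (u : ℝ → ℤ → ℂ) : Prop :=
  (∀ n : ℤ, u 0 n = uin n) ∧
  (∀ t : ℝ, InV k0 lam s (u t)) ∧
  (∀ t : ℝ, ∀ n : ℤ, 1 ≤ n →
    HasDerivAt (fun τ => u τ n) (-sB a b c k0 lam (u t) n) t) ∧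
  Continuous (fun t => ∑' n : ℕ,
    (kk k0 lam ((n : ℤ) + 1)) ^ (2 * s) * ‖u t ((n : ℤ) + 1)‖ ^ 2) ∧
  Continuous (fun t => ∑' n : ℕ,
    (kk k0 lam ((n : ℤ) + 1)) ^ (2 * s) * ‖sB a b c k0 lam (u t) ((n : ℤ) + 1)‖ ^ 2)

/-!
Since `a + b + c = 0`, the polynomial `a + b x + c x ^ 2` has the roots `1` and `a / c = λ^{2 d₀}`.
At such a root the transfers of `k_n^{2d} |u_n| ^ 2` within the triads telescope, so the first `N`
shells lose `|u|_d ^ 2` only through the flux across the shell `N`, which tends to `0` as `N → ∞`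
for solutions in `V_s`, `s ≥ d ≥ 1`. Thus `|u|_{d₀}` is conserved, and as `d₀ ≥ 1` it bounds
`‖u‖_{w^{1,∞}} = sup k_n |u_n|` uniformly in time. The nonlinearity satisfies
`|B(u, w)|_s ≤ C ‖w‖_{w^{1,∞}} |u|_s`, so by Grönwall `|u|_s` grows at most exponentially.
On `V_s ≅ ℓ²`, where the equation is an ODE with a locally Lipschitz field, such an a priori bound
excludes blow-up.
-/

section GlobalTrajectories

open Set Metric
open scoped NNReal

lemma uIcc_zero_subset_of_mem {τ t : ℝ} (ht : t ∈ uIcc 0 τ) : uIcc 0 t ⊆ uIcc 0 τ :=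
  uIcc_subset_uIcc left_mem_uIcc ht

lemma eq_of_mem_uIcc_zero_of_abs_le {r t : ℝ} (hr : r ∈ uIcc 0 t) (h : |t| ≤ |r|) : r = t := by
  rw [mem_uIcc] at hr
  rcases hr with ⟨h0, hrt⟩ | ⟨htr, h0⟩
  · rw [abs_of_nonneg h0, abs_of_nonneg (h0.trans hrt)] at h
    exact hrt.antisymm h
  · rw [abs_of_nonpos h0, abs_of_nonpos (htr.trans h0)] at h
    linarith

lemma le_of_bootstrap {f : ℝ → ℝ} {R R' τ : ℝ} (hRR' : R < R') (h0 : f 0 ≤ R')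
    (hf : ContinuousOn f (uIcc 0 τ))
    (hstep : ∀ t ∈ uIcc 0 τ, (∀ r ∈ uIcc 0 t, f r ≤ R') → f t ≤ R) : f τ ≤ R := by
  suffices hle : ∀ t ∈ uIcc 0 τ, f t ≤ R' from
    hstep τ right_mem_uIcc fun r hr => hle r hr
  by_contra! hex
  obtain ⟨t, ht, hft⟩ := hex
  have hcross : ∀ t ∈ uIcc 0 τ, R' < f t → ∃ r ∈ uIcc 0 t, f r = R' := fun t ht hft =>
    intermediate_value_uIcc (hf.mono (uIcc_zero_subset_of_mem ht))
      (Icc_subset_uIcc ⟨h0, hft.le⟩)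
  have hcompact : IsCompact (uIcc 0 τ ∩ f ⁻¹' {R'}) :=
    isCompact_uIcc.of_isClosed_subset
      (hf.preimage_isClosed_of_isClosed isCompact_uIcc.isClosed isClosed_singleton)
      inter_subset_left
  obtain ⟨r, hr, hfr⟩ := hcross t ht hft
  -- `σ` is the crossing of the level `R'` closest to the origin.
  obtain ⟨σ, ⟨hσ, hfσ⟩, hmin⟩ := hcompact.exists_isMinOn
    ⟨r, uIcc_zero_subset_of_mem ht hr, hfr⟩ continuous_abs.continuousOn
  have hbelow : ∀ t ∈ uIcc 0 σ, f t ≤ R' := by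
    intro t ht
    by_contra! hft
    obtain ⟨r, hr, hfr⟩ := hcross t (uIcc_zero_subset_of_mem hσ ht) hft
    have hrσ : r ∈ uIcc 0 σ := uIcc_zero_subset_of_mem ht hr
    have hrt : r = t := eq_of_mem_uIcc_zero_of_abs_le hr <|
      (by simpa using abs_sub_left_of_mem_uIcc ht : |t| ≤ |σ|).trans
        (hmin ⟨uIcc_zero_subset_of_mem hσ hrσ, hfr⟩)
    exact hft.ne' (hrt ▸ hfr)
  linarith [hstep σ hσ hbelow, show f σ = R' from hfσ]

variable {E : Type*} [NormedAddCommGroup E]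

/-- A `1`-Lipschitz cut-off function equal to `1` on the ball of radius `ρ` and to `0` outside the
ball of radius `ρ + 1`. -/
def radialCutoff (ρ : ℝ) (v : E) : ℝ := max 0 (min 1 (ρ + 1 - ‖v‖))

lemma radialCutoff_eq_one {ρ : ℝ} {v : E} (hv : ‖v‖ ≤ ρ) : radialCutoff ρ v = 1 := by
  rw [radialCutoff, min_eq_left (by linarith), max_eq_right zero_le_one]

lemma radialCutoff_eq_zero {ρ : ℝ} {v : E} (hv : ρ + 1 ≤ ‖v‖) : radialCutoff ρ v = 0 :=
  max_eq_left ((min_le_right _ _).trans (by linarith))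

lemma norm_radialCutoff_le_one (ρ : ℝ) (v : E) : ‖radialCutoff ρ v‖ ≤ 1 := by
  rw [radialCutoff, Real.norm_of_nonneg (le_max_left _ _)]
  exact max_le zero_le_one (min_le_left _ _)

lemma lipschitzWith_radialCutoff (ρ : ℝ) : LipschitzWith 1 (radialCutoff ρ : E → ℝ) := by
  have : LipschitzWith 1 fun v : E => ρ + 1 - ‖v‖ :=
    .of_dist_le_mul fun v w => by
      simpa [Real.dist_eq, dist_eq_norm, abs_sub_comm] using abs_norm_sub_norm_le v w
  exact (this.const_min 1).const_max 0

variable {F : E → E}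

lemma exists_norm_le_on_closedBall
    (hlip : ∀ ρ, ∃ K, LipschitzOnWith K F (closedBall 0 ρ)) (ρ : ℝ) :
    ∃ L : ℝ≥0, ∀ v ∈ closedBall 0 ρ, ‖F v‖ ≤ L := by
  obtain ⟨K, hK⟩ := hlip ρ
  refine ⟨K * ρ.toNNReal + ‖F 0‖₊, fun v hv => ?_⟩
  have hv' : ‖v‖ ≤ ρ := by simpa using hv
  have hρ : 0 ≤ ρ := (norm_nonneg v).trans hv'
  have hdist := hK.dist_le_mul v hv 0 (by simpa using hρ)
  rw [dist_eq_norm, dist_zero_right] at hdist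
  have := norm_le_norm_add_norm_sub' (F v) (F 0)
  push_cast
  rw [Real.coe_toNNReal ρ hρ]
  nlinarith [mul_le_mul_of_nonneg_left hv' K.coe_nonneg]

variable [NormedSpace ℝ E]

lemma norm_le_norm_zero_mul_exp {v v' : ℝ → E} {K τ : ℝ}
    (hv : ∀ t ∈ uIcc 0 τ, HasDerivAt v (v' t) t) (hbound : ∀ t ∈ uIcc 0 τ, ‖v' t‖ ≤ K * ‖v t‖) :
    ‖v τ‖ ≤ ‖v 0‖ * Real.exp (K * |τ|) := by
  have hmem : ∀ r ∈ Icc (0 : ℝ) 1, r * τ ∈ uIcc 0 τ := fun r hr => by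
    rw [mem_uIcc]
    rcases le_total 0 τ with h | h
    · exact .inl ⟨mul_nonneg hr.1 h, mul_le_of_le_one_left h hr.2⟩
    · exact .inr ⟨by nlinarith [hr.2], mul_nonpos_of_nonneg_of_nonpos hr.1 h⟩
  have hder : ∀ r ∈ Icc (0 : ℝ) 1, HasDerivAt (fun r => v (r * τ)) (τ • v' (r * τ)) r :=
    fun r hr => (hv _ (hmem r hr)).scomp r (hasDerivAt_mul_const τ)
  have := norm_le_gronwallBound_of_norm_deriv_right_le (δ := ‖v 0‖) (K := K * |τ|) (ε := 0)
    (fun r hr => (hder r hr).continuousAt.continuousWithinAt)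
    (fun r hr => (hder r (Ico_subset_Icc_self hr)).hasDerivWithinAt) (by simp)
    (fun r hr => ?_) 1 (right_mem_Icc.2 zero_le_one)
  · simpa [gronwallBound_ε0] using this
  · rw [norm_smul, Real.norm_eq_abs, add_zero, mul_right_comm, mul_comm]
    exact mul_le_mul_of_nonneg_right (hbound _ (hmem r (Ico_subset_Icc_self hr))) (abs_nonneg τ)

lemma lipschitzOnWith_smul_of_norm_le {f : E → ℝ} {g : E → E} {s : Set E} {Kf Kg A B : ℝ≥0}
    (hf : LipschitzOnWith Kf f s) (hg : LipschitzOnWith Kg g s) (hA : ∀ v ∈ s, ‖f v‖ ≤ A)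
    (hB : ∀ v ∈ s, ‖g v‖ ≤ B) : LipschitzOnWith (A * Kg + Kf * B) (fun v => f v • g v) s := by
  refine .of_dist_le_mul fun v hv w hw => ?_
  have hf' := hf.dist_le_mul v hv w hw
  have hg' := hg.dist_le_mul v hv w hw
  have hA' := hA v hv
  have hB' := hB w hw
  rw [dist_eq_norm] at hf' hg' ⊢
  calc ‖f v • g v - f w • g w‖ = ‖f v • (g v - g w) + (f v - f w) • g w‖ := by
        rw [smul_sub, sub_smul]; abel_nf
    _ ≤ ‖f v‖ * ‖g v - g w‖ + ‖f v - f w‖ * ‖g w‖ := by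
        simpa only [norm_smul] using norm_add_le (f v • (g v - g w)) ((f v - f w) • g w)
    _ ≤ A * (Kg * dist v w) + (Kf * dist v w) * B := by gcongr
    _ = (A * Kg + Kf * B : ℝ≥0) * dist v w := by push_cast; ring

lemma lipschitzOnWith_radialCutoff_smul
    (hlip : ∀ ρ, ∃ K, LipschitzOnWith K F (closedBall 0 ρ)) (R ρ : ℝ) :
    ∃ K, LipschitzOnWith K (fun v => radialCutoff R v • F v) (closedBall 0 ρ) := by
  obtain ⟨K, hK⟩ := hlip ρ
  obtain ⟨L, hL⟩ := exists_norm_le_on_closedBall hlip ρ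
  exact ⟨_, lipschitzOnWith_smul_of_norm_le (lipschitzWith_radialCutoff R).lipschitzOnWith hK
    (A := 1) (fun v _ => by simpa using norm_radialCutoff_le_one R v) hL⟩

lemma exists_norm_radialCutoff_smul_le
    (hlip : ∀ ρ, ∃ K, LipschitzOnWith K F (closedBall 0 ρ)) (R : ℝ) :
    ∃ L : ℝ≥0, ∀ v, ‖radialCutoff R v • F v‖ ≤ L := by
  obtain ⟨L, hL⟩ := exists_norm_le_on_closedBall hlip (R + 1)
  refine ⟨L, fun v => ?_⟩
  rcases le_total ‖v‖ (R + 1) with hv | hv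
  · rw [norm_smul]
    exact (mul_le_of_le_one_left (norm_nonneg _) (norm_radialCutoff_le_one R v)).trans
      (hL v (by simpa using hv))
  · simp [radialCutoff_eq_zero hv]

lemma eqOn_Ioo_of_hasDerivAt
    (hlip : ∀ ρ, ∃ K, LipschitzOnWith K F (closedBall 0 ρ)) {v w : ℝ → E} {T : ℝ}
    (hv : ∀ t ∈ Ioo (-T) T, HasDerivAt v (F (v t)) t)
    (hw : ∀ t ∈ Ioo (-T) T, HasDerivAt w (F (w t)) t) (h0 : v 0 = w 0) :
    EqOn v w (Ioo (-T) T) := by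
  intro t ht
  obtain ⟨r, hr0, hrT⟩ := exists_between (abs_lt.2 ht)
  have hsub : Icc (-r) r ⊆ Ioo (-T) T := Icc_subset_Ioo (by linarith) hrT
  obtain ⟨A, hA⟩ := isCompact_Icc.exists_bound_of_continuousOn (s := Icc (-r) r) (f := v)
    fun t ht => (hv t (hsub ht)).continuousAt.continuousWithinAt
  obtain ⟨B, hB⟩ := isCompact_Icc.exists_bound_of_continuousOn (s := Icc (-r) r) (f := w)
    fun t ht => (hw t (hsub ht)).continuousAt.continuousWithinAt
  obtain ⟨K, hK⟩ := hlip (max A B)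
  exact ODE_solution_unique_of_mem_Ioo (v := fun _ => F) (t₀ := 0)
    (s := fun _ => closedBall 0 (max A B)) (fun _ _ => hK)
    (abs_lt.1 (by simpa using (abs_nonneg t).trans_lt hr0))
    (fun t ht => ⟨hv t (hsub (Ioo_subset_Icc_self ht)),
      by simpa using .inl (hA t (Ioo_subset_Icc_self ht))⟩)
    (fun t ht => ⟨hw t (hsub (Ioo_subset_Icc_self ht)),
      by simpa using .inr (hB t (Ioo_subset_Icc_self ht))⟩) h0 (abs_lt.1 hr0)

lemma exists_forall_hasDerivAt_of_forall_Ioo {x₀ : E}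
    (hlip : ∀ ρ, ∃ K, LipschitzOnWith K F (closedBall 0 ρ))
    (hloc : ∀ T > 0, ∃ v : ℝ → E, v 0 = x₀ ∧ ∀ t ∈ Ioo (-T) T, HasDerivAt v (F (v t)) t) :
    ∃ v : ℝ → E, v 0 = x₀ ∧ ∀ t, HasDerivAt v (F (v t)) t := by
  choose! w hw0 hw using hloc
  have heqOn : ∀ S T, 0 < S → S ≤ T → EqOn (w S) (w T) (Ioo (-S) S) := fun S T hS hST =>
    eqOn_Ioo_of_hasDerivAt hlip (hw S hS)
      (fun t ht => hw T (hS.trans_le hST) t (Ioo_subset_Ioo (neg_le_neg hST) hST ht))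
      ((hw0 S hS).trans (hw0 T (hS.trans_le hST)).symm)
  have heq : ∀ t T, |t| < T → w (|t| + 1) t = w T t := fun t T ht => by
    have hT : 0 < T := (abs_nonneg t).trans_lt ht
    rcases le_total (|t| + 1) T with h | h
    · exact heqOn _ T (by positivity) h (abs_lt.1 (lt_add_one |t|))
    · exact (heqOn T _ hT h (abs_lt.1 ht)).symm
  refine ⟨fun t => w (|t| + 1) t, hw0 _ (by positivity), fun t => ?_⟩
  refine (hw (|t| + 1) (by positivity) t (abs_lt.1 (lt_add_one _))).congr_of_eventuallyEq ?_
  filter_upwards [(isOpen_lt continuous_abs continuous_const).mem_nhds (lt_add_one |t|)] with r hr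
  exact heq r _ hr

lemma exists_lipschitzOnWith_closedBall_apply_self (B : E →L[ℝ] E →L[ℝ] E) (ρ : ℝ) :
    ∃ K, LipschitzOnWith K (fun v => B v v) (closedBall 0 ρ) := by
  refine ⟨2 * ‖B‖₊ * ρ.toNNReal, .of_dist_le_mul fun v hv w hw => ?_⟩
  have hv' : ‖v‖ ≤ ρ := by simpa using hv
  have hw' : ‖w‖ ≤ ρ := by simpa using hw
  have hρ : 0 ≤ ρ := (norm_nonneg v).trans hv'
  rw [dist_eq_norm, dist_eq_norm]
  calc ‖B v v - B w w‖ = ‖B (v - w) v + B w (v - w)‖ := by simp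
    _ ≤ ‖B‖ * ‖v - w‖ * ‖v‖ + ‖B‖ * ‖w‖ * ‖v - w‖ :=
        (norm_add_le _ _).trans (add_le_add (B.le_opNorm₂ _ _) (B.le_opNorm₂ _ _))
    _ ≤ ‖B‖ * ‖v - w‖ * ρ + ‖B‖ * ρ * ‖v - w‖ := by gcongr
    _ = (2 * ‖B‖₊ * ρ.toNNReal : ℝ≥0) * ‖v - w‖ := by
        push_cast
        rw [Real.coe_toNNReal ρ hρ]
        ring

variable [CompleteSpace E]

lemma exists_hasDerivAt_Ioo_of_norm_le (x₀ : E)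
    (hlip : ∀ ρ, ∃ K, LipschitzOnWith K F (closedBall 0 ρ)) {L : ℝ≥0} (hL : ∀ v, ‖F v‖ ≤ L)
    {T : ℝ} (hT : 0 ≤ T) :
    ∃ v : ℝ → E, v 0 = x₀ ∧ ∀ t ∈ Ioo (-T) T, HasDerivAt v (F (v t)) t := by
  obtain ⟨K, hK⟩ := hlip (‖x₀‖ + L * T)
  have hpl : IsPicardLindelof (fun _ => F) (⟨0, by constructor <;> linarith⟩ : Icc (-T) T) x₀
      (L * T.toNNReal) 0 L K := by
    refine .of_time_independent (fun v _ => hL v) (hK.mono ?_) (by simp [hT])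
    refine closedBall_subset_closedBall' ?_
    simp [hT, add_comm]
  obtain ⟨v, hv0, hv⟩ := hpl.exists_eq_forall_mem_Icc_hasDerivWithinAt₀
  exact ⟨v, hv0, fun t ht => (hv t (Ioo_subset_Icc_self ht)).hasDerivAt (Icc_mem_nhds ht.1 ht.2)⟩

-- The trajectory of the field cut off beyond radius `R + 1` never leaves the ball of radius `R`, so
-- it does not see the cut-off.
lemma exists_hasDerivAt_Ioo_of_apriori_bound {x₀ : E}
    (hlip : ∀ ρ, ∃ K, LipschitzOnWith K F (closedBall 0 ρ)) {R T : ℝ} (hT : 0 < T)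
    (hR : ∀ τ ∈ Ioo (-T) T, ∀ v : ℝ → E, v 0 = x₀ →
      (∀ t ∈ uIcc 0 τ, HasDerivAt v (F (v t)) t) → ‖v τ‖ ≤ R) :
    ∃ v : ℝ → E, v 0 = x₀ ∧ ∀ t ∈ Ioo (-T) T, HasDerivAt v (F (v t)) t := by
  have hsub : ∀ τ ∈ Ioo (-T) T, uIcc 0 τ ⊆ Ioo (-T) T := fun τ hτ =>
    ordConnected_Ioo.uIcc_subset ⟨by linarith, hT⟩ hτ
  have hx₀ : ‖x₀‖ ≤ R := by
    simpa using hR 0 ⟨by linarith, hT⟩ (fun t => x₀ + t • F x₀) (by simp) fun t ht => by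
      obtain rfl : t = 0 := by simpa using ht
      simpa using (hasDerivAt_id (0 : ℝ)).smul_const (F x₀) |>.const_add x₀
  obtain ⟨L, hL⟩ := exists_norm_radialCutoff_smul_le hlip (R + 1)
  obtain ⟨v, hv0, hv⟩ := exists_hasDerivAt_Ioo_of_norm_le x₀
    (lipschitzOnWith_radialCutoff_smul hlip (R + 1)) hL hT.le
  have huntruncated : ∀ t ∈ Ioo (-T) T, ‖v t‖ ≤ R + 1 → HasDerivAt v (F (v t)) t :=
    fun t ht hvt => by simpa only [radialCutoff_eq_one hvt, one_smul] using hv t ht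
  have hbound : ∀ τ ∈ Ioo (-T) T, ‖v τ‖ ≤ R := fun τ hτ =>
    le_of_bootstrap (lt_add_one R) (by simpa [hv0] using hx₀.trans (lt_add_one R).le)
      (fun t ht => (hv t (hsub τ hτ ht)).continuousAt.norm.continuousWithinAt)
      fun t ht hle => hR t (hsub τ hτ ht) v hv0 fun r hr =>
        huntruncated r (hsub t (hsub τ hτ ht) hr) (hle r hr)
  exact ⟨v, hv0, fun t ht => huntruncated t ht ((hbound t ht).trans (lt_add_one R).le)⟩

theorem exists_forall_hasDerivAt_of_apriori_bound {x₀ : E}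
    (hlip : ∀ ρ, ∃ K, LipschitzOnWith K F (closedBall 0 ρ))
    (hapriori : ∀ T, ∃ R, ∀ τ ∈ Ioo (-T) T, ∀ v : ℝ → E, v 0 = x₀ →
      (∀ t ∈ uIcc 0 τ, HasDerivAt v (F (v t)) t) → ‖v τ‖ ≤ R) :
    ∃ v : ℝ → E, v 0 = x₀ ∧ ∀ t, HasDerivAt v (F (v t)) t :=
  exists_forall_hasDerivAt_of_forall_Ioo hlip fun T hT =>
    have ⟨_, hR⟩ := hapriori T
    exists_hasDerivAt_Ioo_of_apriori_bound hlip hT hR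

end GlobalTrajectories

section PassageToTheLimit

open Set Filter Topology

lemma limit_eq_of_tendsto_deriv_zero {E : Type*} [NormedAddCommGroup E] [NormedSpace ℝ E]
    [CompleteSpace E] {f f' : ℕ → ℝ → E} {x y : E} {α β C : ℝ}
    (hf : ∀ N, ∀ t ∈ uIcc α β, HasDerivAt (f N) (f' N t) t)
    (hcont : ∀ N, ContinuousOn (f' N) (uIcc α β))
    (hbound : ∀ N, ∀ t ∈ uIcc α β, ‖f' N t‖ ≤ C)
    (hlim : ∀ t ∈ uIcc α β, Tendsto (fun N => f' N t) atTop (𝓝 0))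
    (hx : Tendsto (fun N => f N α) atTop (𝓝 x)) (hy : Tendsto (fun N => f N β) atTop (𝓝 y)) :
    x = y := by
  have hzero : Tendsto (fun N => ∫ t in α..β, f' N t) atTop (𝓝 (∫ _ in α..β, (0 : E))) := by
    refine intervalIntegral.tendsto_integral_filter_of_dominated_convergence (fun _ => C)
      (.of_forall fun N => ?_) (.of_forall fun N => .of_forall fun t ht => ?_) (by simp)
      (.of_forall fun t ht => hlim t (uIoc_subset_uIcc ht))
    · exact (hcont N).intervalIntegrable.def'.aestronglyMeasurable
    · exact hbound N t (uIoc_subset_uIcc ht)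
  have hdiff : ∀ N, ∫ t in α..β, f' N t = f N β - f N α := fun N =>
    intervalIntegral.integral_eq_sub_of_hasDerivAt (hf N) (hcont N).intervalIntegrable
  simp only [hdiff, intervalIntegral.integral_zero] at hzero
  exact (sub_eq_zero.1 (tendsto_nhds_unique (hy.sub hx) hzero)).symm

end PassageToTheLimit

section Wavenumbers

variable {k0 lam : ℝ}

lemma kk_pos (hk0 : 0 < k0) (hlam : 0 < lam) (n : ℤ) : 0 < kk k0 lam n :=
  mul_pos hk0 (zpow_pos hlam n)

lemma kk_zero : kk k0 lam 0 = k0 := by simp [kk]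

lemma kk_mono (hk0 : 0 ≤ k0) (hlam : 1 ≤ lam) : Monotone (kk k0 lam) := fun _ _ h =>
  mul_le_mul_of_nonneg_left (zpow_le_zpow_right₀ hlam h) hk0

lemma kk_add_one (hlam : lam ≠ 0) (n : ℤ) : kk k0 lam (n + 1) = lam * kk k0 lam n := by
  rw [kk, kk, zpow_add_one₀ hlam]
  ring

lemma kk_add_rpow (hk0 : 0 ≤ k0) (hlam : 0 < lam) (n j : ℤ) (r : ℝ) :
    kk k0 lam (n + j) ^ r = lam ^ (j * r) * kk k0 lam n ^ r := by
  rw [kk, kk, zpow_add₀ hlam.ne', mul_comm (lam ^ n), mul_left_comm,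
    Real.mul_rpow (zpow_nonneg hlam.le j) (mul_nonneg hk0 (zpow_nonneg hlam.le n)),
    Real.rpow_mul hlam.le, Real.rpow_intCast]

lemma kk_rpow_le_kk_one_rpow_mul (hk0 : 0 < k0) (hlam : 1 ≤ lam) {p q : ℝ} (hpq : p ≤ q) {n : ℤ}
    (hn : 1 ≤ n) : kk k0 lam n ^ p ≤ kk k0 lam 1 ^ (p - q) * kk k0 lam n ^ q := by
  have hpos := kk_pos hk0 (zero_lt_one.trans_le hlam)
  calc kk k0 lam n ^ p = kk k0 lam n ^ (p - q) * kk k0 lam n ^ q := by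
        rw [← Real.rpow_add (hpos n), sub_add_cancel]
    _ ≤ kk k0 lam 1 ^ (p - q) * kk k0 lam n ^ q :=
        mul_le_mul_of_nonneg_right (Real.rpow_le_rpow_of_nonpos (hpos 1)
          (kk_mono hk0.le hlam hn) (sub_nonpos.2 hpq)) (Real.rpow_nonneg (hpos n).le q)

end Wavenumbers

section ShellNorms

open Filter Topology

variable {k0 lam p q r : ℝ} {u : ℤ → ℂ}

/-- The amplitude `k_n ^ r |u_n|` of the shell `n` in `V_r`. Its supremum over `n` is the norm of
`w^{1,∞}` when `r = 1`. -/
noncomputable def shellAmp (k0 lam r : ℝ) (u : ℤ → ℂ) (n : ℤ) : ℝ := kk k0 lam n ^ r * ‖u n‖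

/-- The squared norm `|u|_r ^ 2` of `V_r`. -/
noncomputable def shellNormSq (k0 lam r : ℝ) (u : ℤ → ℂ) : ℝ :=
  ∑' n : ℕ, kk k0 lam ((n : ℤ) + 1) ^ (2 * r) * ‖u ((n : ℤ) + 1)‖ ^ 2

lemma shellAmp_nonneg (hk0 : 0 < k0) (hlam : 0 < lam) (r : ℝ) (u : ℤ → ℂ) (n : ℤ) :
    0 ≤ shellAmp k0 lam r u n :=
  mul_nonneg (Real.rpow_nonneg (kk_pos hk0 hlam n).le r) (norm_nonneg _)

lemma shellAmp_eq_zero (hu : ∀ n ≤ 0, u n = 0) {n : ℤ} (hn : n ≤ 0) :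
    shellAmp k0 lam r u n = 0 := by
  simp [shellAmp, hu n hn]

lemma shellAmp_sq (hk0 : 0 < k0) (hlam : 0 < lam) (r : ℝ) (u : ℤ → ℂ) (n : ℤ) :
    shellAmp k0 lam r u n ^ 2 = kk k0 lam n ^ (2 * r) * ‖u n‖ ^ 2 := by
  rw [shellAmp, mul_pow, mul_comm 2 r, Real.rpow_mul (kk_pos hk0 hlam n).le, Real.rpow_two]

lemma kk_rpow_mul_norm (hk0 : 0 < k0) (hlam : 0 < lam) (r : ℝ) (u : ℤ → ℂ) (n j : ℤ) :
    kk k0 lam n ^ r * ‖u (n + j)‖ = lam ^ (-(j * r)) * shellAmp k0 lam r u (n + j) := by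
  rw [shellAmp, kk_add_rpow hk0.le hlam, ← mul_assoc, ← mul_assoc, ← Real.rpow_add hlam,
    neg_add_cancel, Real.rpow_zero, one_mul]

lemma shellNormSq_eq_tsum_shellAmp_sq (hk0 : 0 < k0) (hlam : 0 < lam) (r : ℝ) (u : ℤ → ℂ) :
    shellNormSq k0 lam r u = ∑' n : ℕ, shellAmp k0 lam r u (n + 1) ^ 2 := by
  simp only [shellNormSq, shellAmp_sq hk0 hlam]

lemma InV.summable_shellAmp_sq (hk0 : 0 < k0) (hlam : 0 < lam) (hu : InV k0 lam r u) :
    Summable fun n : ℕ => shellAmp k0 lam r u (n + 1) ^ 2 := by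
  simpa only [shellAmp_sq hk0 hlam] using hu.2

lemma InV.tendsto_shellAmp (hk0 : 0 < k0) (hlam : 0 < lam) (hu : InV k0 lam r u) :
    Tendsto (fun n : ℕ => shellAmp k0 lam r u (n + 1)) atTop (𝓝 0) := by
  have := (hu.summable_shellAmp_sq hk0 hlam).tendsto_atTop_zero.sqrt
  simpa only [Real.sqrt_sq (shellAmp_nonneg hk0 hlam r u _), Real.sqrt_zero] using this

lemma InV.shellAmp_le_sqrt (hk0 : 0 < k0) (hlam : 0 < lam) (hu : InV k0 lam r u) (n : ℤ) :
    shellAmp k0 lam r u n ≤ √(shellNormSq k0 lam r u) := by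
  rcases le_or_gt n 0 with hn | hn
  · exact (shellAmp_eq_zero hu.1 hn).trans_le (Real.sqrt_nonneg _)
  · obtain ⟨m, rfl⟩ : ∃ m : ℕ, n = m + 1 := ⟨(n - 1).toNat, by omega⟩
    rw [shellNormSq_eq_tsum_shellAmp_sq hk0 hlam]
    exact Real.le_sqrt_of_sq_le
      ((hu.summable_shellAmp_sq hk0 hlam).le_tsum m fun _ _ => sq_nonneg _)

lemma shellAmp_le_kk_one_rpow_mul (hk0 : 0 < k0) (hlam : 1 ≤ lam) (hpq : p ≤ q)
    (hu : ∀ n ≤ 0, u n = 0) (n : ℤ) :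
    shellAmp k0 lam p u n ≤ kk k0 lam 1 ^ (p - q) * shellAmp k0 lam q u n := by
  rcases le_or_gt n 0 with hn | hn
  · simp [shellAmp_eq_zero hu hn]
  · rw [shellAmp, shellAmp, ← mul_assoc]
    exact mul_le_mul_of_nonneg_right (kk_rpow_le_kk_one_rpow_mul hk0 hlam hpq hn)
      (norm_nonneg _)

lemma InV.shellAmp_le_mul_sqrt (hk0 : 0 < k0) (hlam : 1 ≤ lam) (hpq : p ≤ q)
    (hu : InV k0 lam q u) (n : ℤ) :
    shellAmp k0 lam p u n ≤ kk k0 lam 1 ^ (p - q) * √(shellNormSq k0 lam q u) := by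
  have hlam0 : 0 < lam := zero_lt_one.trans_le hlam
  exact (shellAmp_le_kk_one_rpow_mul hk0 hlam hpq hu.1 n).trans <| mul_le_mul_of_nonneg_left
    (hu.shellAmp_le_sqrt hk0 hlam0 n) (Real.rpow_nonneg (kk_pos hk0 hlam0 1).le _)

lemma InV.of_le (hk0 : 0 < k0) (hlam : 1 ≤ lam) (hpq : p ≤ q) (hu : InV k0 lam q u) :
    InV k0 lam p u := by
  refine ⟨hu.1, .of_nonneg_of_le (fun n => ?_) (fun n => ?_)
    (hu.2.mul_left (kk k0 lam 1 ^ (2 * p - 2 * q)))⟩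
  · exact mul_nonneg (Real.rpow_nonneg (kk_pos hk0 (by linarith) _).le _) (sq_nonneg _)
  · rw [← mul_assoc]
    exact mul_le_mul_of_nonneg_right
      (kk_rpow_le_kk_one_rpow_mul hk0 hlam (by linarith) (by omega)) (sq_nonneg _)

end ShellNorms

section EnstrophyConservation

open Filter Topology Set

variable {a b c k0 lam d s : ℝ} {u : ℤ → ℂ}

/-- The energy transfer `k_{n+1} Im (u_{n+2} u_{n+1}^* u_n^*)` within the triad of shells
`n, n + 1, n + 2`. -/
noncomputable def triadTransfer (k0 lam : ℝ) (u : ℤ → ℂ) (n : ℤ) : ℝ :=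
  kk k0 lam (n + 1) * (u (n + 2) * (starRingEnd ℂ) (u (n + 1)) * (starRingEnd ℂ) (u n)).im

/-- The flux of `|u|_d ^ 2` (up to the factor `2`) through the shell `n`, for the exponent `d` at
which `|u|_d` is formally conserved. -/
noncomputable def enstrophyFlux (a c k0 lam d : ℝ) (u : ℤ → ℂ) (n : ℤ) : ℝ :=
  a * kk k0 lam n ^ (2 * d) * triadTransfer k0 lam u n
    - c * kk k0 lam (n + 1) ^ (2 * d) * triadTransfer k0 lam u (n - 1)

lemma inner_sB (u : ℤ → ℂ) (n : ℤ) :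
    inner ℝ (u n) (sB a b c k0 lam u n) =
      a * triadTransfer k0 lam u n + b * triadTransfer k0 lam u (n - 1)
        + c * triadTransfer k0 lam u (n - 2) := by
  simp only [Complex.inner, sB, triadTransfer, show n - 1 + 1 = n by ring,
    show n - 1 + 2 = n + 1 by ring, show n - 2 + 1 = n - 1 by ring, sub_add_cancel,
    Complex.mul_re, Complex.mul_im, Complex.add_re, Complex.add_im, Complex.sub_re,
    Complex.sub_im, Complex.neg_re, Complex.neg_im, Complex.I_re, Complex.I_im, Complex.conj_re,
    Complex.conj_im, Complex.ofReal_re, Complex.ofReal_im]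
  ring

lemma sum_inner_sB_eq_enstrophyFlux (hk0 : 0 ≤ k0) (hlam : 0 < lam)
    (hroot : a + b * lam ^ (2 * d) + c * (lam ^ (2 * d)) ^ 2 = 0) (hu : ∀ n ≤ 0, u n = 0) (N : ℕ) :
    ∑ n ∈ Finset.range N,
      kk k0 lam (n + 1) ^ (2 * d) * inner ℝ (u (n + 1)) (sB a b c k0 lam u (n + 1)) =
      enstrophyFlux a c k0 lam d u N := by
  induction N with
  | zero => simp [enstrophyFlux, triadTransfer, hu]
  | succ N ih =>
    rw [Finset.sum_range_succ, ih, inner_sB]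
    push_cast
    simp only [enstrophyFlux, add_sub_cancel_right, show (N : ℤ) + 1 - 2 = N - 1 by ring,
      kk_add_rpow hk0 hlam, Int.cast_one, one_mul]
    linear_combination (kk k0 lam N ^ (2 * d) * triadTransfer k0 lam u N) * hroot

lemma kk_rpow_mul_kk_rpow_mul_kk_rpow (hk0 : 0 < k0) (hlam : 0 < lam) (s : ℝ) (n : ℤ) :
    kk k0 lam n ^ s * kk k0 lam (n + 1) ^ s * kk k0 lam (n + 2) ^ s =
      kk k0 lam (n + 1) ^ (3 * s) := by
  have hk := fun m => (kk_pos hk0 hlam m).le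
  have hgeom : kk k0 lam n * kk k0 lam (n + 1) * kk k0 lam (n + 2) = kk k0 lam (n + 1) ^ 3 := by
    rw [show n + 2 = n + 1 + 1 by ring, kk_add_one hlam.ne' (n + 1), kk_add_one hlam.ne' n]
    ring
  rw [← Real.mul_rpow (hk _) (hk _), ← Real.mul_rpow (mul_nonneg (hk _) (hk _)) (hk _), hgeom,
    Real.rpow_mul (hk _)]
  norm_cast

lemma abs_triadTransfer_le (hk0 : 0 < k0) (hlam : 0 < lam) (s : ℝ) (u : ℤ → ℂ) (n : ℤ) :
    |triadTransfer k0 lam u n| ≤ kk k0 lam (n + 1) ^ (1 - 3 * s) *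
      (shellAmp k0 lam s u n * shellAmp k0 lam s u (n + 1) * shellAmp k0 lam s u (n + 2)) := by
  have hk := kk_pos hk0 hlam (n + 1)
  have hpow : kk k0 lam (n + 1) = kk k0 lam (n + 1) ^ (1 - 3 * s) *
      (kk k0 lam n ^ s * kk k0 lam (n + 1) ^ s * kk k0 lam (n + 2) ^ s) := by
    rw [kk_rpow_mul_kk_rpow_mul_kk_rpow hk0 hlam, ← Real.rpow_add hk, sub_add_cancel,
      Real.rpow_one]
  calc |triadTransfer k0 lam u n|
      ≤ kk k0 lam (n + 1) * (‖u (n + 2)‖ * ‖u (n + 1)‖ * ‖u n‖) := by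
        rw [triadTransfer, abs_mul, abs_of_pos hk]
        refine mul_le_mul_of_nonneg_left ((Complex.abs_im_le_norm _).trans_eq ?_) hk.le
        simp
    _ = _ := by
        conv_lhs => rw [hpow]
        simp only [shellAmp]
        ring

lemma kk_rpow_mul_abs_triadTransfer_le (hk0 : 0 < k0) (hlam : 1 ≤ lam)
    (hds : 2 * d + 1 ≤ 3 * s) (u : ℤ → ℂ) {n : ℤ} (hn : 0 ≤ n + 1) :
    kk k0 lam (n + 1) ^ (2 * d) * |triadTransfer k0 lam u n| ≤ k0 ^ (2 * d + 1 - 3 * s) *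
      (shellAmp k0 lam s u n * shellAmp k0 lam s u (n + 1) * shellAmp k0 lam s u (n + 2)) := by
  have hlam0 : 0 < lam := zero_lt_one.trans_le hlam
  have hk := kk_pos hk0 hlam0 (n + 1)
  have hy := shellAmp_nonneg hk0 hlam0 s u
  have hle : kk k0 lam (n + 1) ^ (2 * d + 1 - 3 * s) ≤ k0 ^ (2 * d + 1 - 3 * s) :=
    Real.rpow_le_rpow_of_nonpos hk0 (kk_zero.symm.trans_le (kk_mono hk0.le hlam hn))
      (sub_nonpos.2 hds)
  calc _ ≤ kk k0 lam (n + 1) ^ (2 * d) * _ := mul_le_mul_of_nonneg_left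
        (abs_triadTransfer_le hk0 hlam0 s u n) (Real.rpow_nonneg hk.le _)
    _ = kk k0 lam (n + 1) ^ (2 * d + 1 - 3 * s) * _ := by
        rw [← mul_assoc, ← Real.rpow_add hk, add_sub_assoc]
    _ ≤ _ := mul_le_mul_of_nonneg_right hle (mul_nonneg (mul_nonneg (hy _) (hy _)) (hy _))

lemma abs_enstrophyFlux_le_add (hk0 : 0 < k0) (hlam : 0 < lam) (u : ℤ → ℂ) (n : ℤ) :
    |enstrophyFlux a c k0 lam d u n| ≤
      |a| * lam ^ (-(2 * d)) * (kk k0 lam (n + 1) ^ (2 * d) * |triadTransfer k0 lam u n|)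
        + |c| * lam ^ (2 * d) * (kk k0 lam n ^ (2 * d) * |triadTransfer k0 lam u (n - 1)|) := by
  have hk := fun m => Real.rpow_nonneg (kk_pos hk0 hlam m).le (2 * d)
  have hstep : kk k0 lam (n + 1) ^ (2 * d) = lam ^ (2 * d) * kk k0 lam n ^ (2 * d) := by
    rw [kk_add_rpow hk0.le hlam, Int.cast_one, one_mul]
  calc |enstrophyFlux a c k0 lam d u n|
      ≤ |a| * kk k0 lam n ^ (2 * d) * |triadTransfer k0 lam u n|
        + |c| * kk k0 lam (n + 1) ^ (2 * d) * |triadTransfer k0 lam u (n - 1)| := by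
        refine (abs_sub _ _).trans_eq ?_
        simp only [abs_mul, abs_of_nonneg (hk _)]
    _ = _ := by
        rw [hstep, Real.rpow_neg hlam.le]
        field_simp

/-- The constant `C` of the flux bound `|Π_N| ≤ C Y ^ 2 k_{N+1}^s |u_{N+1}|`, where `Y` bounds
`k_n ^ s |u_n|` for all `n`. -/
noncomputable def fluxConst (a c k0 lam d s : ℝ) : ℝ :=
  (|a| * lam ^ (-(2 * d)) + |c| * lam ^ (2 * d)) * k0 ^ (2 * d + 1 - 3 * s)

lemma fluxConst_nonneg (a c : ℝ) (hk0 : 0 ≤ k0) (hlam : 0 ≤ lam) (d s : ℝ) :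
    0 ≤ fluxConst a c k0 lam d s := by
  unfold fluxConst
  positivity

-- One amplitude is kept on the right because it makes the flux vanish as `N → ∞`.
lemma abs_enstrophyFlux_le (hk0 : 0 < k0) (hlam : 1 ≤ lam) (hds : 2 * d + 1 ≤ 3 * s) {Y : ℝ}
    (hY : ∀ n, shellAmp k0 lam s u n ≤ Y) (N : ℕ) :
    |enstrophyFlux a c k0 lam d u N| ≤
      fluxConst a c k0 lam d s * Y ^ 2 * shellAmp k0 lam s u (N + 1) := by
  have hlam0 : 0 < lam := zero_lt_one.trans_le hlam
  have hy := shellAmp_nonneg hk0 hlam0 s u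
  have hY0 : 0 ≤ Y := (hy 0).trans (hY 0)
  have hout : kk k0 lam (N + 1) ^ (2 * d) * |triadTransfer k0 lam u N| ≤
      k0 ^ (2 * d + 1 - 3 * s) * (Y * shellAmp k0 lam s u (N + 1) * Y) := by
    refine (kk_rpow_mul_abs_triadTransfer_le hk0 hlam hds u (n := N) (by omega)).trans ?_
    exact mul_le_mul_of_nonneg_left (mul_le_mul (mul_le_mul_of_nonneg_right (hY _) (hy _))
      (hY _) (hy _) (mul_nonneg hY0 (hy _))) (Real.rpow_nonneg hk0.le _)
  have hin : kk k0 lam N ^ (2 * d) * |triadTransfer k0 lam u (N - 1)| ≤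
      k0 ^ (2 * d + 1 - 3 * s) * (Y * Y * shellAmp k0 lam s u (N + 1)) := by
    have := kk_rpow_mul_abs_triadTransfer_le hk0 hlam hds u (n := N - 1) (by omega)
    rw [sub_add_cancel, show (N : ℤ) - 1 + 2 = N + 1 by ring] at this
    refine this.trans ?_
    gcongr
    exacts [hy _, hy _, hY _, hY _]
  calc |enstrophyFlux a c k0 lam d u N|
      ≤ |a| * lam ^ (-(2 * d)) * (kk k0 lam (N + 1) ^ (2 * d) * |triadTransfer k0 lam u N|)
        + |c| * lam ^ (2 * d) * (kk k0 lam N ^ (2 * d) * |triadTransfer k0 lam u (N - 1)|) :=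
        abs_enstrophyFlux_le_add hk0 hlam0 u N
    _ ≤ |a| * lam ^ (-(2 * d)) *
          (k0 ^ (2 * d + 1 - 3 * s) * (Y * shellAmp k0 lam s u (N + 1) * Y))
        + |c| * lam ^ (2 * d) *
          (k0 ^ (2 * d + 1 - 3 * s) * (Y * Y * shellAmp k0 lam s u (N + 1))) :=
        add_le_add (mul_le_mul_of_nonneg_left hout (by positivity))
          (mul_le_mul_of_nonneg_left hin (by positivity))
    _ = _ := by rw [fluxConst]; ring

lemma shellNormSq_eq_of_hasDerivAt (hk0 : 0 < k0) (hlam : 1 ≤ lam) (hds : d ≤ s)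
    (hds' : 2 * d + 1 ≤ 3 * s) (hroot : a + b * lam ^ (2 * d) + c * (lam ^ (2 * d)) ^ 2 = 0)
    {u : ℝ → ℤ → ℂ} {α β M : ℝ} (hu : ∀ t ∈ uIcc α β, InV k0 lam s (u t))
    (hM : ∀ t ∈ uIcc α β, shellNormSq k0 lam s (u t) ≤ M)
    (hder : ∀ t ∈ uIcc α β, ∀ n, 1 ≤ n →
      HasDerivAt (fun τ => u τ n) (-sB a b c k0 lam (u t) n) t) :
    shellNormSq k0 lam d (u α) = shellNormSq k0 lam d (u β) := by
  have hlam0 : 0 < lam := zero_lt_one.trans_le hlam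
  have hamp : ∀ t ∈ uIcc α β, ∀ n, shellAmp k0 lam s (u t) n ≤ √M := fun t ht n =>
    ((hu t ht).shellAmp_le_sqrt hk0 hlam0 n).trans (Real.sqrt_le_sqrt (hM t ht))
  have hflux : ∀ (N : ℕ), ∀ t ∈ uIcc α β, ‖-2 * enstrophyFlux a c k0 lam d (u t) N‖ ≤
      2 * (fluxConst a c k0 lam d s * √M ^ 2 * shellAmp k0 lam s (u t) (N + 1)) := by
    intro N t ht
    rw [norm_mul, norm_neg, Real.norm_ofNat]
    exact mul_le_mul_of_nonneg_left (abs_enstrophyFlux_le hk0 hlam hds' (hamp t ht) N) zero_le_two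
  have hshell : ∀ n, ContinuousOn (fun t => u t n) (uIcc α β) := fun n t ht => by
    rcases le_or_gt n 0 with hn | hn
    · exact continuousOn_const.congr (fun r hr => (hu r hr).1 n hn) t ht
    · exact (hder t ht n hn).continuousAt.continuousWithinAt
  have hlim : ∀ t ∈ uIcc α β, Tendsto (fun N => ∑ n ∈ Finset.range N,
      kk k0 lam (n + 1) ^ (2 * d) * ‖u t (n + 1)‖ ^ 2) atTop (𝓝 (shellNormSq k0 lam d (u t))) :=
    fun t ht => ((hu t ht).of_le hk0 hlam hds).2.hasSum.tendsto_sum_nat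
  refine limit_eq_of_tendsto_deriv_zero
    (f := fun N t => ∑ n ∈ Finset.range N, kk k0 lam (n + 1) ^ (2 * d) * ‖u t (n + 1)‖ ^ 2)
    (f' := fun N t => -2 * enstrophyFlux a c k0 lam d (u t) N)
    (C := 2 * (fluxConst a c k0 lam d s * √M ^ 2 * √M)) (fun N t ht => ?_) (fun N => ?_)
    (fun N t ht => (hflux N t ht).trans ?_) (fun t ht => ?_)
    (hlim α left_mem_uIcc) (hlim β right_mem_uIcc)
  · refine (HasDerivAt.fun_sum fun (n : ℕ) _ => (hder t ht (n + 1) (by omega)).norm_sq.const_mul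
      (kk k0 lam (n + 1) ^ (2 * d))).congr_deriv ?_
    rw [← sum_inner_sB_eq_enstrophyFlux hk0.le hlam0 hroot (hu t ht).1, Finset.mul_sum]
    exact Finset.sum_congr rfl fun n _ => by rw [inner_neg_right]; ring
  · unfold enstrophyFlux triadTransfer
    fun_prop
  · have := fluxConst_nonneg a c hk0.le hlam0.le d s
    gcongr
    exact hamp t ht _
  · refine squeeze_zero_norm (hflux · t ht) ?_
    simpa using (((hu t ht).tendsto_shellAmp hk0 hlam0).const_mul
      (fluxConst a c k0 lam d s * √M ^ 2)).const_mul 2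

end EnstrophyConservation

section BilinearEstimate

open Function

variable {a b c k0 lam s : ℝ} {u w : ℤ → ℂ}

lemma InV.hasSum_shellAmp_sq (hk0 : 0 < k0) (hlam : 0 < lam) (hu : InV k0 lam s u) :
    HasSum (fun n : ℤ => shellAmp k0 lam s u n ^ 2) (shellNormSq k0 lam s u) := by
  have hinj : Injective fun n : ℕ => (n : ℤ) + 1 := fun m n h => by simpa using h
  refine (hinj.hasSum_iff fun n hn => ?_).1 ?_
  · have : n ≤ 0 := by
      by_contra! h
      exact hn ⟨(n - 1).toNat, by dsimp only; omega⟩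
    rw [shellAmp_eq_zero hu.1 this, zero_pow two_ne_zero]
  · rw [shellNormSq_eq_tsum_shellAmp_sq hk0 hlam]
    exact (hu.summable_shellAmp_sq hk0 hlam).hasSum

lemma InV.summable_shellAmp_sq_add (hk0 : 0 < k0) (hlam : 0 < lam) (hu : InV k0 lam s u) (j : ℤ) :
    Summable fun n : ℕ => shellAmp k0 lam s u (n + 1 + j) ^ 2 :=
  (hu.hasSum_shellAmp_sq hk0 hlam).summable.comp_injective (i := fun n : ℕ => (n : ℤ) + 1 + j)
    fun m n h => by simpa using h

lemma InV.tsum_shellAmp_sq_add_le (hk0 : 0 < k0) (hlam : 0 < lam) (hu : InV k0 lam s u) (j : ℤ) :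
    ∑' n : ℕ, shellAmp k0 lam s u (n + 1 + j) ^ 2 ≤ shellNormSq k0 lam s u := by
  have hsum := hu.hasSum_shellAmp_sq hk0 hlam
  rw [← hsum.tsum_eq]
  exact tsum_comp_le_tsum_of_inj hsum.summable (fun _ => sq_nonneg _)
    (i := fun n : ℕ => (n : ℤ) + 1 + j) fun m n h => by simpa using h

lemma add_add_sq_le_add_add_mul {α β γ : ℝ} (hα : 0 ≤ α) (hβ : 0 ≤ β) (hγ : 0 ≤ γ) (x y z : ℝ) :
    (α * x + β * y + γ * z) ^ 2 ≤ (α + β + γ) * (α * x ^ 2 + β * y ^ 2 + γ * z ^ 2) := by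
  nlinarith [mul_nonneg (mul_nonneg hα hβ) (sq_nonneg (x - y)),
    mul_nonneg (mul_nonneg hα hγ) (sq_nonneg (x - z)),
    mul_nonneg (mul_nonneg hβ hγ) (sq_nonneg (y - z))]

/-- A polarization `B(u, w)` of the sabra nonlinearity, cut off to the shells `n ≥ 1`. In each term
`w` is put in place of a factor `u_{n±1}` whose wavenumber is comparable with the coefficient, so
that a bound on `k_n |w_n|` absorbs that coefficient. -/
noncomputable def sabraBilin (a b c k0 lam : ℝ) :
    (ℤ → ℂ) →ₗ[ℝ] (ℤ → ℂ) →ₗ[ℝ] (ℤ → ℂ) :=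
  LinearMap.mk₂ ℝ
    (fun u w n => if 1 ≤ n then
      -Complex.I * ((a : ℂ) * (kk k0 lam (n + 1) : ℝ) * u (n + 2) * (starRingEnd ℂ) (w (n + 1))
        + (b : ℂ) * (kk k0 lam n : ℝ) * u (n + 1) * (starRingEnd ℂ) (w (n - 1))
        - (c : ℂ) * (kk k0 lam (n - 1) : ℝ) * w (n - 1) * u (n - 2)) else 0)
    (fun u u' w => by ext n; simp only [Pi.add_apply]; split_ifs <;> ring)
    (fun r u w => by
      ext n; simp only [Pi.smul_apply, Complex.real_smul]; split_ifs <;> ring)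
    (fun u w w' => by ext n; simp only [Pi.add_apply, map_add]; split_ifs <;> ring)
    (fun r u w => by
      ext n
      simp only [Pi.smul_apply, Complex.real_smul, map_mul, Complex.conj_ofReal]
      split_ifs <;> ring)

lemma sabraBilin_self_apply (u : ℤ → ℂ) {n : ℤ} (hn : 1 ≤ n) :
    sabraBilin a b c k0 lam u u n = sB a b c k0 lam u n := if_pos hn

lemma sabraBilin_apply_of_nonpos (u w : ℤ → ℂ) {n : ℤ} (hn : n ≤ 0) :
    sabraBilin a b c k0 lam u w n = 0 := if_neg (by omega)

lemma norm_sabraBilin_le (hk0 : 0 < k0) (hlam : 0 < lam) (u : ℤ → ℂ) {M : ℝ}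
    (hw : ∀ m, shellAmp k0 lam 1 w m ≤ M) {n : ℤ} (hn : 1 ≤ n) :
    ‖sabraBilin a b c k0 lam u w n‖ ≤
      M * (|a| * ‖u (n + 2)‖ + |b| * lam * ‖u (n + 1)‖ + |c| * ‖u (n - 2)‖) := by
  simp only [shellAmp, Real.rpow_one] at hw
  have hk := fun m => (kk_pos hk0 hlam m).le
  have hkn : kk k0 lam n = lam * kk k0 lam (n - 1) := by
    rw [← kk_add_one hlam.ne', sub_add_cancel]
  calc ‖sabraBilin a b c k0 lam u w n‖
      ≤ |a| * kk k0 lam (n + 1) * ‖u (n + 2)‖ * ‖w (n + 1)‖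
        + |b| * kk k0 lam n * ‖u (n + 1)‖ * ‖w (n - 1)‖
        + |c| * kk k0 lam (n - 1) * ‖w (n - 1)‖ * ‖u (n - 2)‖ := by
        refine (congrArg norm (if_pos hn)).trans_le ?_
        rw [norm_mul, norm_neg, Complex.norm_I, one_mul]
        refine (norm_sub_le _ _).trans
          ((add_le_add_left (norm_add_le _ _) _).trans_eq ?_)
        simp only [norm_mul, Complex.norm_real, Real.norm_eq_abs, RCLike.norm_conj,
          abs_of_nonneg (hk _)]
    _ = |a| * ‖u (n + 2)‖ * (kk k0 lam (n + 1) * ‖w (n + 1)‖)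
        + |b| * lam * ‖u (n + 1)‖ * (kk k0 lam (n - 1) * ‖w (n - 1)‖)
        + |c| * ‖u (n - 2)‖ * (kk k0 lam (n - 1) * ‖w (n - 1)‖) := by
        rw [hkn]
        ring
    _ ≤ |a| * ‖u (n + 2)‖ * M + |b| * lam * ‖u (n + 1)‖ * M + |c| * ‖u (n - 2)‖ * M := by
        gcongr <;> exact hw _
    _ = _ := by ring

lemma shellAmp_sabraBilin_le (hk0 : 0 < k0) (hlam : 0 < lam) (s : ℝ) (u : ℤ → ℂ)
    {M : ℝ} (hw : ∀ m, shellAmp k0 lam 1 w m ≤ M) {n : ℤ} (hn : 1 ≤ n) :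
    shellAmp k0 lam s (sabraBilin a b c k0 lam u w) n ≤
      M * (|a| * lam ^ (-(2 * s)) * shellAmp k0 lam s u (n + 2)
        + |b| * lam ^ (1 - s) * shellAmp k0 lam s u (n + 1)
        + |c| * lam ^ (2 * s) * shellAmp k0 lam s u (n - 2)) := by
  have hup₂ := kk_rpow_mul_norm hk0 hlam s u n 2
  have hup₁ := kk_rpow_mul_norm hk0 hlam s u n 1
  have hdown₂ := kk_rpow_mul_norm hk0 hlam s u n (-2)
  push_cast at hup₂ hup₁ hdown₂
  rw [← sub_eq_add_neg] at hdown₂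
  calc kk k0 lam n ^ s * ‖sabraBilin a b c k0 lam u w n‖
      ≤ kk k0 lam n ^ s *
        (M * (|a| * ‖u (n + 2)‖ + |b| * lam * ‖u (n + 1)‖ + |c| * ‖u (n - 2)‖)) :=
        mul_le_mul_of_nonneg_left (norm_sabraBilin_le hk0 hlam u hw hn)
          (Real.rpow_nonneg (kk_pos hk0 hlam n).le s)
    _ = M * (|a| * (kk k0 lam n ^ s * ‖u (n + 2)‖)
        + |b| * lam * (kk k0 lam n ^ s * ‖u (n + 1)‖)
        + |c| * (kk k0 lam n ^ s * ‖u (n - 2)‖)) := by ring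
    _ = _ := by
        rw [hup₂, hup₁, hdown₂, sub_eq_add_neg 1 s, Real.rpow_add hlam, Real.rpow_one]
        ring_nf

/-- The constant of the tame estimate `|B(u, w)|_s ≤ C ‖w‖_{w^{1,∞}} |u|_s`. -/
noncomputable def bilinConst (a b c lam s : ℝ) : ℝ :=
  |a| * lam ^ (-(2 * s)) + |b| * lam ^ (1 - s) + |c| * lam ^ (2 * s)

lemma bilinConst_nonneg (a b c : ℝ) (hlam : 0 ≤ lam) (s : ℝ) : 0 ≤ bilinConst a b c lam s := by
  unfold bilinConst
  positivity

lemma shellAmp_sabraBilin_sq_le (hk0 : 0 < k0) (hlam : 0 < lam) (s : ℝ) (u : ℤ → ℂ)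
    {M : ℝ} (hw : ∀ m, shellAmp k0 lam 1 w m ≤ M) {n : ℤ} (hn : 1 ≤ n) :
    shellAmp k0 lam s (sabraBilin a b c k0 lam u w) n ^ 2 ≤
      bilinConst a b c lam s * M ^ 2 * (|a| * lam ^ (-(2 * s)) * shellAmp k0 lam s u (n + 2) ^ 2
        + |b| * lam ^ (1 - s) * shellAmp k0 lam s u (n + 1) ^ 2
        + |c| * lam ^ (2 * s) * shellAmp k0 lam s u (n - 2) ^ 2) := by
  have hcauchy := add_add_sq_le_add_add_mul (α := |a| * lam ^ (-(2 * s)))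
    (β := |b| * lam ^ (1 - s)) (γ := |c| * lam ^ (2 * s)) (by positivity) (by positivity)
    (by positivity) (shellAmp k0 lam s u (n + 2)) (shellAmp k0 lam s u (n + 1))
    (shellAmp k0 lam s u (n - 2))
  refine (pow_le_pow_left₀ (shellAmp_nonneg hk0 hlam s _ n)
    (shellAmp_sabraBilin_le hk0 hlam s u hw hn) 2).trans ?_
  rw [mul_pow, mul_comm (bilinConst a b c lam s), mul_assoc (M ^ 2)]
  exact mul_le_mul_of_nonneg_left hcauchy (sq_nonneg M)

lemma InV.exists_hasSum_shellAmp_sq_le (hk0 : 0 < k0) (hlam : 0 < lam) (hu : InV k0 lam s u)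
    {α β γ : ℝ} (hα : 0 ≤ α) (hβ : 0 ≤ β) (hγ : 0 ≤ γ) :
    ∃ S ≤ (α + β + γ) * shellNormSq k0 lam s u,
      HasSum (fun n : ℕ => α * shellAmp k0 lam s u (n + 1 + 2) ^ 2
        + β * shellAmp k0 lam s u (n + 1 + 1) ^ 2 + γ * shellAmp k0 lam s u (n + 1 - 2) ^ 2) S := by
  have hshift := fun j => (hu.summable_shellAmp_sq_add hk0 hlam j).hasSum
  have hle := hu.tsum_shellAmp_sq_add_le hk0 hlam
  have hsum := (((hshift 2).mul_left α).add ((hshift 1).mul_left β)).add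
    ((hshift (-2)).mul_left γ)
  refine ⟨_, ?_, hsum⟩
  rw [add_mul, add_mul]
  exact add_le_add (add_le_add (mul_le_mul_of_nonneg_left (hle 2) hα)
    (mul_le_mul_of_nonneg_left (hle 1) hβ)) (mul_le_mul_of_nonneg_left (hle (-2)) hγ)

lemma inV_sabraBilin (hk0 : 0 < k0) (hlam : 0 < lam) (hu : InV k0 lam s u)
    {M : ℝ} (hw : ∀ m, shellAmp k0 lam 1 w m ≤ M) :
    InV k0 lam s (sabraBilin a b c k0 lam u w) := by
  obtain ⟨S, -, hS⟩ := hu.exists_hasSum_shellAmp_sq_le hk0 hlam (α := |a| * lam ^ (-(2 * s)))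
    (β := |b| * lam ^ (1 - s)) (γ := |c| * lam ^ (2 * s)) (by positivity) (by positivity)
    (by positivity)
  refine ⟨fun n hn => sabraBilin_apply_of_nonpos u w hn, ?_⟩
  simp only [← shellAmp_sq hk0 hlam]
  exact (hS.summable.mul_left (bilinConst a b c lam s * M ^ 2)).of_nonneg_of_le
    (fun n => sq_nonneg _) fun n => shellAmp_sabraBilin_sq_le hk0 hlam s u hw (by omega)

lemma shellNormSq_sabraBilin_le (hk0 : 0 < k0) (hlam : 0 < lam) (hu : InV k0 lam s u)
    {M : ℝ} (hw : ∀ m, shellAmp k0 lam 1 w m ≤ M) :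
    shellNormSq k0 lam s (sabraBilin a b c k0 lam u w) ≤
      (bilinConst a b c lam s * M) ^ 2 * shellNormSq k0 lam s u := by
  obtain ⟨S, hle, hS⟩ := hu.exists_hasSum_shellAmp_sq_le hk0 hlam (α := |a| * lam ^ (-(2 * s)))
    (β := |b| * lam ^ (1 - s)) (γ := |c| * lam ^ (2 * s)) (by positivity) (by positivity)
    (by positivity)
  have hC := bilinConst_nonneg a b c hlam.le s
  calc shellNormSq k0 lam s (sabraBilin a b c k0 lam u w)
      ≤ bilinConst a b c lam s * M ^ 2 * S := by
        rw [shellNormSq_eq_tsum_shellAmp_sq hk0 hlam]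
        exact hasSum_le (fun n : ℕ => shellAmp_sabraBilin_sq_le hk0 hlam s u hw (by omega))
          ((inV_sabraBilin hk0 hlam hu hw).summable_shellAmp_sq hk0 hlam).hasSum (hS.mul_left _)
    _ ≤ bilinConst a b c lam s * M ^ 2 * (bilinConst a b c lam s * shellNormSq k0 lam s u) :=
        mul_le_mul_of_nonneg_left hle (by positivity)
    _ = _ := by ring

end BilinearEstimate

section PhaseSpace

open scoped lp

variable {a b c k0 lam s : ℝ}

/-- The state with the rescaled amplitudes `k_n ^ s u_n = v_{n-1}`, `n ≥ 1`: this identifies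
`ℓ²(ℕ, ℂ)` with `V_s`. -/
noncomputable def shellState (k0 lam s : ℝ) : ℓ²(ℕ, ℂ) →ₗ[ℝ] (ℤ → ℂ) where
  toFun v n := if 1 ≤ n then kk k0 lam n ^ (-s) • v (n - 1).toNat else 0
  map_add' v w := by
    ext n
    simp only [lp.coeFn_add, Pi.add_apply]
    split_ifs <;> module
  map_smul' r v := by
    ext n
    simp only [lp.coeFn_smul, Pi.smul_apply, RingHom.id_apply]
    split_ifs <;> module

lemma shellState_apply_add_one (v : ℓ²(ℕ, ℂ)) (n : ℕ) :
    shellState k0 lam s v (n + 1) = kk k0 lam (n + 1) ^ (-s) • v n := by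
  simp [shellState]

lemma shellState_apply_of_nonpos (v : ℓ²(ℕ, ℂ)) {n : ℤ} (hn : n ≤ 0) :
    shellState k0 lam s v n = 0 := if_neg (by omega)

lemma shellAmp_shellState (hk0 : 0 < k0) (hlam : 0 < lam) (v : ℓ²(ℕ, ℂ)) (n : ℕ) :
    shellAmp k0 lam s (shellState k0 lam s v) (n + 1) = ‖v n‖ := by
  have hk := kk_pos hk0 hlam (n + 1)
  rw [shellAmp, shellState_apply_add_one, norm_smul,
    Real.norm_of_nonneg (Real.rpow_nonneg hk.le _), ← mul_assoc, ← Real.rpow_add hk,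
    add_neg_cancel, Real.rpow_zero, one_mul]

lemma hasSum_shellAmp_shellState_sq (hk0 : 0 < k0) (hlam : 0 < lam) (v : ℓ²(ℕ, ℂ)) :
    HasSum (fun n : ℕ => shellAmp k0 lam s (shellState k0 lam s v) (n + 1) ^ 2) (‖v‖ ^ 2) := by
  simpa [shellAmp_shellState hk0 hlam] using lp.hasSum_norm (p := 2) (by simp) v

lemma inV_shellState (hk0 : 0 < k0) (hlam : 0 < lam) (v : ℓ²(ℕ, ℂ)) :
    InV k0 lam s (shellState k0 lam s v) :=
  ⟨fun _ => shellState_apply_of_nonpos v, by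
    simpa only [shellAmp_sq hk0 hlam] using (hasSum_shellAmp_shellState_sq hk0 hlam v).summable⟩

lemma shellNormSq_shellState (hk0 : 0 < k0) (hlam : 0 < lam) (v : ℓ²(ℕ, ℂ)) :
    shellNormSq k0 lam s (shellState k0 lam s v) = ‖v‖ ^ 2 := by
  rw [shellNormSq_eq_tsum_shellAmp_sq hk0 hlam,
    (hasSum_shellAmp_shellState_sq hk0 hlam v).tsum_eq]

lemma shellState_injective (hk0 : 0 < k0) (hlam : 0 < lam) :
    Function.Injective (shellState k0 lam s) := by
  refine (injective_iff_map_eq_zero _).2 fun v hv => ?_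
  have h : ‖v‖ ^ 2 = 0 := by
    rw [← shellNormSq_shellState (s := s) hk0 hlam, hv]
    simp [shellNormSq]
  simpa using h

lemma exists_shellState_eq (hk0 : 0 < k0) (hlam : 0 < lam) {u : ℤ → ℂ} (hu : InV k0 lam s u) :
    ∃ v, shellState k0 lam s v = u := by
  have hk := fun n => kk_pos hk0 hlam n
  have hmem : Memℓp (fun n : ℕ => kk k0 lam (n + 1) ^ s • u (n + 1)) 2 := by
    refine memℓp_gen ?_
    simpa [shellAmp, norm_smul, Real.norm_of_nonneg (Real.rpow_nonneg (hk _).le s)] using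
      hu.summable_shellAmp_sq hk0 hlam
  refine ⟨⟨_, hmem⟩, funext fun n => ?_⟩
  rcases le_or_gt n 0 with hn | hn
  · rw [shellState_apply_of_nonpos _ hn, hu.1 n hn]
  · obtain ⟨m, rfl⟩ : ∃ m : ℕ, n = m + 1 := ⟨(n - 1).toNat, by omega⟩
    rw [shellState_apply_add_one, smul_smul, ← Real.rpow_add (hk _), neg_add_cancel,
      Real.rpow_zero, one_smul]

lemma hasDerivAt_shellState {v : ℝ → ℓ²(ℕ, ℂ)} {v' : ℓ²(ℕ, ℂ)} {t : ℝ}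
    (hv : HasDerivAt v v' t) (n : ℤ) :
    HasDerivAt (fun τ => shellState k0 lam s (v τ) n) (shellState k0 lam s v' n) t := by
  by_cases hn : 1 ≤ n
  · simp only [shellState, LinearMap.coe_mk, AddHom.coe_mk, if_pos hn]
    exact ((lp.evalCLM ℝ (fun _ : ℕ => ℂ) 2 (n - 1).toNat).hasFDerivAt.comp_hasDerivAt t
      hv).const_smul (kk k0 lam n ^ (-s))
  · simpa [shellState, hn] using hasDerivAt_const t (0 : ℂ)

lemma norm_le_of_shellState_eq_sabraBilin (hk0 : 0 < k0) (hlam : 0 < lam) {v w z : ℓ²(ℕ, ℂ)}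
    (hz : shellState k0 lam s z =
      sabraBilin a b c k0 lam (shellState k0 lam s v) (shellState k0 lam s w)) {M : ℝ}
    (hM : 0 ≤ M) (hw : ∀ n, shellAmp k0 lam 1 (shellState k0 lam s w) n ≤ M) :
    ‖z‖ ≤ bilinConst a b c lam s * M * ‖v‖ := by
  have hC := bilinConst_nonneg a b c hlam.le s
  refine (sq_le_sq₀ (norm_nonneg _) (by positivity)).1 ?_
  rw [← shellNormSq_shellState (s := s) hk0 hlam, hz, mul_pow,
    ← shellNormSq_shellState (s := s) hk0 hlam v]
  exact shellNormSq_sabraBilin_le hk0 hlam (inV_shellState hk0 hlam v) hw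

lemma shellAmp_one_shellState_le (hk0 : 0 < k0) (hlam : 1 ≤ lam) (hs : 1 ≤ s) (w : ℓ²(ℕ, ℂ))
    (n : ℤ) : shellAmp k0 lam 1 (shellState k0 lam s w) n ≤ kk k0 lam 1 ^ (1 - s) * ‖w‖ := by
  have hlam0 : 0 < lam := zero_lt_one.trans_le hlam
  simpa [shellNormSq_shellState hk0 hlam0] using
    (inV_shellState hk0 hlam0 w).shellAmp_le_mul_sqrt hk0 hlam hs n

/-- `B` is the polarized sabra nonlinearity on `V_s`, read on `ℓ²(ℕ, ℂ)` through `shellState`. -/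
def RepresentsSabraBilin (a b c k0 lam s : ℝ) (B : ℓ²(ℕ, ℂ) →L[ℝ] ℓ²(ℕ, ℂ) →L[ℝ] ℓ²(ℕ, ℂ)) :
    Prop :=
  ∀ v w, shellState k0 lam s (B v w) =
    sabraBilin a b c k0 lam (shellState k0 lam s v) (shellState k0 lam s w)

lemma exists_representsSabraBilin (a b c : ℝ) (hk0 : 0 < k0) (hlam : 1 ≤ lam) (hs : 1 ≤ s) :
    ∃ B, RepresentsSabraBilin a b c k0 lam s B := by
  have hlam0 : 0 < lam := zero_lt_one.trans_le hlam
  have hamp := shellAmp_one_shellState_le hk0 hlam hs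
  have hinj := shellState_injective (s := s) hk0 hlam0
  choose f hf using fun v w => exists_shellState_eq hk0 hlam0 <|
    inV_sabraBilin (a := a) (b := b) (c := c) hk0 hlam0
      (inV_shellState (s := s) hk0 hlam0 v) (hamp w)
  let B : ℓ²(ℕ, ℂ) →ₗ[ℝ] ℓ²(ℕ, ℂ) →ₗ[ℝ] ℓ²(ℕ, ℂ) := LinearMap.mk₂ ℝ f
    (fun v v' w => hinj <| by simp only [hf, map_add, LinearMap.add_apply])
    (fun r v w => hinj <| by simp only [hf, map_smul, LinearMap.smul_apply])
    (fun v w w' => hinj <| by simp only [hf, map_add])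
    (fun r v w => hinj <| by simp only [hf, map_smul])
  refine ⟨B.mkContinuous₂ (bilinConst a b c lam s * kk k0 lam 1 ^ (1 - s)) fun v w => ?_, hf⟩
  refine (norm_le_of_shellState_eq_sabraBilin hk0 hlam0 (hf v w) (mul_nonneg
    (Real.rpow_nonneg (kk_pos hk0 hlam0 1).le _) (norm_nonneg w)) (hamp w)).trans_eq ?_
  ring

end PhaseSpace

section GlobalSolution

open Set
open scoped lp

variable {a b c k0 lam d s : ℝ} {B : ℓ²(ℕ, ℂ) →L[ℝ] ℓ²(ℕ, ℂ) →L[ℝ] ℓ²(ℕ, ℂ)}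

lemma hasDerivAt_shellState_neg_sB
    (hB : RepresentsSabraBilin a b c k0 lam s B) {v : ℝ → ℓ²(ℕ, ℂ)} {t : ℝ}
    (hv : HasDerivAt v (-B (v t) (v t)) t) {n : ℤ} (hn : 1 ≤ n) :
    HasDerivAt (fun τ => shellState k0 lam s (v τ) n)
      (-sB a b c k0 lam (shellState k0 lam s (v t)) n) t := by
  simpa [hB (v t), sabraBilin_self_apply _ hn] using hasDerivAt_shellState (k0 := k0) (lam := lam)
    (s := s) hv n

lemma shellNormSq_shellState_eq_of_hasDerivAt (hk0 : 0 < k0) (hlam : 1 ≤ lam) (hds : d ≤ s)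
    (hds' : 2 * d + 1 ≤ 3 * s) (hroot : a + b * lam ^ (2 * d) + c * (lam ^ (2 * d)) ^ 2 = 0)
    (hB : RepresentsSabraBilin a b c k0 lam s B)
    {v : ℝ → ℓ²(ℕ, ℂ)} {α β : ℝ} (hv : ∀ t ∈ uIcc α β, HasDerivAt v (-B (v t) (v t)) t) :
    shellNormSq k0 lam d (shellState k0 lam s (v α)) =
      shellNormSq k0 lam d (shellState k0 lam s (v β)) := by
  have hlam0 : 0 < lam := zero_lt_one.trans_le hlam
  have hcont : ContinuousOn (fun t => ‖v t‖ ^ 2) (uIcc α β) := fun t ht =>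
    ((hv t ht).continuousAt.norm.pow 2).continuousWithinAt
  obtain ⟨M, hM⟩ := isCompact_uIcc.bddAbove_image hcont
  refine shellNormSq_eq_of_hasDerivAt (u := fun t => shellState k0 lam s (v t)) (M := M) hk0 hlam
    hds hds' hroot (fun t _ => inV_shellState hk0 hlam0 _) (fun t ht => ?_)
    fun t ht n hn => hasDerivAt_shellState_neg_sB hB (hv t ht) hn
  rw [shellNormSq_shellState hk0 hlam0]
  exact hM (mem_image_of_mem _ ht)

lemma norm_le_norm_zero_mul_exp_of_hasDerivAt (hk0 : 0 < k0) (hlam : 1 ≤ lam) (hd : 1 ≤ d)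
    (hds : d ≤ s) (hroot : a + b * lam ^ (2 * d) + c * (lam ^ (2 * d)) ^ 2 = 0)
    (hB : RepresentsSabraBilin a b c k0 lam s B)
    {v : ℝ → ℓ²(ℕ, ℂ)} {τ : ℝ} (hv : ∀ t ∈ uIcc 0 τ, HasDerivAt v (-B (v t) (v t)) t) :
    ‖v τ‖ ≤ ‖v 0‖ * Real.exp (bilinConst a b c lam s * (kk k0 lam 1 ^ (1 - d) *
      √(shellNormSq k0 lam d (shellState k0 lam s (v 0)))) * |τ|) := by
  have hlam0 : 0 < lam := zero_lt_one.trans_le hlam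
  refine norm_le_norm_zero_mul_exp hv fun t ht => ?_
  have hconserved := shellNormSq_shellState_eq_of_hasDerivAt hk0 hlam hds (by linarith) hroot hB
    fun r hr => hv r (uIcc_zero_subset_of_mem ht hr)
  rw [norm_neg]
  refine norm_le_of_shellState_eq_sabraBilin hk0 hlam0 (hB _ _)
    (mul_nonneg (Real.rpow_nonneg (kk_pos hk0 hlam0 1).le _) (Real.sqrt_nonneg _)) fun n => ?_
  rw [hconserved]
  exact ((inV_shellState hk0 hlam0 _).of_le hk0 hlam hds).shellAmp_le_mul_sqrt hk0 hlam hd n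

lemma isGlobalSolution_shellState (hk0 : 0 < k0) (hlam : 0 < lam)
    (hB : RepresentsSabraBilin a b c k0 lam s B)
    {v : ℝ → ℓ²(ℕ, ℂ)} (hv : ∀ t, HasDerivAt v (-B (v t) (v t)) t) :
    IsGlobalSolution a b c k0 lam s (shellState k0 lam s (v 0))
      fun t => shellState k0 lam s (v t) := by
  have hcont : Continuous v := continuous_iff_continuousAt.2 fun t => (hv t).continuousAt
  have hnorm : ∀ t, shellNormSq k0 lam s (shellState k0 lam s (v t)) = ‖v t‖ ^ 2 :=
    fun t => shellNormSq_shellState hk0 hlam _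
  have hnorm_sB : ∀ t, (∑' n : ℕ, kk k0 lam ((n : ℤ) + 1) ^ (2 * s) *
      ‖sB a b c k0 lam (shellState k0 lam s (v t)) ((n : ℤ) + 1)‖ ^ 2) =
      ‖B (v t) (v t)‖ ^ 2 := fun t => by
    rw [← shellNormSq_shellState (s := s) hk0 hlam, hB (v t), shellNormSq]
    exact tsum_congr fun n => by rw [sabraBilin_self_apply _ (by omega)]
  refine ⟨fun _ => rfl, fun t => inV_shellState hk0 hlam _,
    fun t n hn => hasDerivAt_shellState_neg_sB hB (hv t) hn, ?_, ?_⟩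
  · exact (hcont.norm.pow 2).congr fun t => (hnorm t).symm
  · simp only [hnorm_sB]
    fun_prop

theorem exists_isGlobalSolution (hk0 : 0 < k0) (hlam : 1 ≤ lam) (hd : 1 ≤ d) (hds : d ≤ s)
    (hroot : a + b * lam ^ (2 * d) + c * (lam ^ (2 * d)) ^ 2 = 0) {uin : ℤ → ℂ}
    (huin : InV k0 lam s uin) : ∃ u, IsGlobalSolution a b c k0 lam s uin u := by
  have hlam0 : 0 < lam := zero_lt_one.trans_le hlam
  obtain ⟨B, hB⟩ := exists_representsSabraBilin a b c hk0 hlam (hd.trans hds)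
  obtain ⟨x₀, rfl⟩ := exists_shellState_eq hk0 hlam0 huin
  set K := bilinConst a b c lam s *
    (kk k0 lam 1 ^ (1 - d) * √(shellNormSq k0 lam d (shellState k0 lam s x₀))) with hK
  have hK0 : 0 ≤ K := mul_nonneg (bilinConst_nonneg a b c hlam0.le s)
    (mul_nonneg (Real.rpow_nonneg (kk_pos hk0 hlam0 1).le _) (Real.sqrt_nonneg _))
  obtain ⟨v, rfl, hv⟩ := exists_forall_hasDerivAt_of_apriori_bound (F := fun v => -B v v)
    (x₀ := x₀) (fun ρ => exists_lipschitzOnWith_closedBall_apply_self (-B) ρ)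
    fun T => ⟨‖x₀‖ * Real.exp (K * T), fun τ hτ v hv0 hv => by
      have hle := norm_le_norm_zero_mul_exp_of_hasDerivAt hk0 hlam hd hds hroot hB hv
      rw [hv0, ← hK] at hle
      refine hle.trans ?_
      gcongr
      exact (abs_lt.2 hτ).le⟩
  exact ⟨_, isGlobalSolution_shellState hk0 hlam0 hB hv⟩

theorem IsGlobalSolution.shellNormSq_eq (hk0 : 0 < k0) (hlam : 1 ≤ lam) (hds : d ≤ s)
    (hds' : 2 * d + 1 ≤ 3 * s) (hroot : a + b * lam ^ (2 * d) + c * (lam ^ (2 * d)) ^ 2 = 0)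
    {uin : ℤ → ℂ} {u : ℝ → ℤ → ℂ} (hu : IsGlobalSolution a b c k0 lam s uin u) (t t' : ℝ) :
    shellNormSq k0 lam d (u t) = shellNormSq k0 lam d (u t') := by
  obtain ⟨-, hV, hder, hcont, -⟩ := hu
  obtain ⟨M, hM⟩ := isCompact_uIcc.bddAbove_image (hcont.continuousOn (s := uIcc t t'))
  exact shellNormSq_eq_of_hasDerivAt hk0 hlam hds hds' hroot (fun r _ => hV r)
    (fun r hr => hM (mem_image_of_mem _ hr)) fun r _ => hder r

end GlobalSolution

section TwoDimensionalRegime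

variable {a b c lam : ℝ}

lemma rpow_two_mul_half_logb (hlam : 1 < lam) {x : ℝ} (hx : 0 < x) :
    lam ^ (2 * ((1 : ℝ) / 2 * Real.logb lam x)) = x := by
  rw [← mul_assoc, mul_one_div_cancel two_ne_zero, one_mul,
    Real.rpow_logb (zero_lt_one.trans hlam) hlam.ne' hx]

lemma one_le_half_logb_div (hlam : 1 < lam) (hca : 0 < c / a) (hca2 : c / a ≤ lam ^ (-2 : ℤ)) :
    1 ≤ (1 : ℝ) / 2 * Real.logb lam (a / c) := by
  have hle : lam ^ (2 : ℝ) ≤ a / c := by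
    rw [← inv_div, le_inv_comm₀ (by positivity) hca]
    simpa using hca2
  have hac : 0 < a / c := by simpa using inv_pos.2 hca
  have := (Real.le_logb_iff_rpow_le hlam hac).2 hle
  linarith

lemma add_mul_div_add_mul_div_sq_eq_zero (habc : a + b + c = 0) (hc : c ≠ 0) :
    a + b * (a / c) + c * (a / c) ^ 2 = 0 := by
  field_simp
  linear_combination a * habc

lemma mul_div_sub_inv_add_mul_eq_zero (habc : a + b + c = 0) (ha : a ≠ 0) (hc : c ≠ 0) :
    a * (a / c - (a / c)⁻¹) + b * (a / c - 1) = 0 := by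
  field_simp
  linear_combination (a - c) * habc

end TwoDimensionalRegime

/-- in the two-dimensional regime `0 < c/a ≤ λ^{-2}` (so
`d₀ = (1/2) log_λ (a/c) ≥ 1`), with `a + b + c = 0`:
(i) `E_{d₀} = a(λ^{2d₀} - λ^{-2d₀}) + b(λ^{2d₀} - 1) = 0`;
(ii) the enstrophy `|u|_{d₀}` is conserved along smooth (`V_s`, `s ≥ d₀`) solutions of
the unforced inviscid sabra shell model;
(iii) every initial datum `u^{in} ∈ V_s`, `s ≥ d₀`, gives rise to a global solution
`u ∈ C¹((-∞,∞), V_s)`. -/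
theorem sabra_2d_regime_global_regularity
    (a b c k0 lam : ℝ) (hk0 : 0 < k0) (hlam : 1 < lam) (habc : a + b + c = 0)
    (hca : 0 < c / a) (hca2 : c / a ≤ lam ^ (-2 : ℤ)) :
    (a * (lam ^ (2 * ((1 : ℝ) / 2 * Real.logb lam (a / c))) -
        lam ^ (-(2 * ((1 : ℝ) / 2 * Real.logb lam (a / c))))) +
      b * (lam ^ (2 * ((1 : ℝ) / 2 * Real.logb lam (a / c))) - 1) = 0) ∧
    (∀ s : ℝ, (1 : ℝ) / 2 * Real.logb lam (a / c) ≤ s →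
      ∀ uin : ℤ → ℂ, ∀ u : ℝ → ℤ → ℂ, IsGlobalSolution a b c k0 lam s uin u →
        ∀ t t' : ℝ,
          (∑' n : ℕ, (kk k0 lam ((n : ℤ) + 1)) ^ (2 * ((1 : ℝ) / 2 * Real.logb lam (a / c))) *
              ‖u t ((n : ℤ) + 1)‖ ^ 2) =
          (∑' n : ℕ, (kk k0 lam ((n : ℤ) + 1)) ^ (2 * ((1 : ℝ) / 2 * Real.logb lam (a / c))) *
              ‖u t' ((n : ℤ) + 1)‖ ^ 2)) ∧
    (∀ s : ℝ, (1 : ℝ) / 2 * Real.logb lam (a / c) ≤ s →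
      ∀ uin : ℤ → ℂ, InV k0 lam s uin →
        ∃ u : ℝ → ℤ → ℂ, IsGlobalSolution a b c k0 lam s uin u) := by
  obtain ⟨hc, ha⟩ : c ≠ 0 ∧ a ≠ 0 := div_ne_zero_iff.1 hca.ne'
  have hd := one_le_half_logb_div hlam hca hca2
  have hpow := rpow_two_mul_half_logb hlam (inv_div c a ▸ inv_pos.2 hca)
  have hroot := add_mul_div_add_mul_div_sq_eq_zero habc hc
  rw [← hpow] at hroot
  refine ⟨?_, fun s hs uin u hu => ?_, fun s hs uin huin => ?_⟩
  · rw [Real.rpow_neg (zero_lt_one.trans hlam).le, hpow]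
    exact mul_div_sub_inv_add_mul_eq_zero habc ha hc
  · exact hu.shellNormSq_eq hk0 hlam.le hs (by linarith) hroot
  · exact exists_isGlobalSolution hk0 hlam.le hd hs hroot huin
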